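/- For every smooth function ψ : ℝ³ → ℂ⁴, the operator L² commutes with Dirac's operator K: L²(Kψ) = K(L²ψ). -/

import Mathlib

noncomputable section

open Matrix

/-- Physical space ℝ³. -/
abbrev E3 := EuclideanSpace ℝ (Fin 3)

/-- The Pauli matrices σ₁, σ₂, σ₃ (indexed by `Fin 3`, with `pauli 0 = σ₁`, etc.). -/
def pauli : Fin 3 → Matrix (Fin 2) (Fin 2) ℂ
  | 0 => !![0, 1; 1, 0]
  | 1 => !![0, -Complex.I; Complex.I, 0]
  | 2 => !![1, 0; 0, -1]

/-- The 4×4 block matrix `[[A, B], [C, D]]` built from 2×2 blocks. -/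
def qblock (A B C D : Matrix (Fin 2) (Fin 2) ℂ) : Matrix (Fin 4) (Fin 4) ℂ :=
  Matrix.reindex finSumFinEquiv finSumFinEquiv (Matrix.fromBlocks A B C D)

/-- The Dirac matrix `β = γ⁰ = [[I₂,0],[0,−I₂]]`. -/
def betaM : Matrix (Fin 4) (Fin 4) ℂ := qblock 1 0 0 (-1)

/-- The spin matrices `Σⱼ = [[σⱼ,0],[0,σⱼ]]` for j = 1,2,3. -/
def SigM (j : Fin 3) : Matrix (Fin 4) (Fin 4) ℂ := qblock (pauli j) 0 0 (pauli j)

/-- The partial derivative `∂ⱼψ` of a ℂ⁴-valued function on ℝ³. -/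
def pd (j : Fin 3) (ψ : E3 → Fin 4 → ℂ) : E3 → Fin 4 → ℂ :=
  fun x => fderiv ℝ ψ x (EuclideanSpace.single j 1)

/-- The orbital angular momentum operator `Lⱼψ = −i (x × ∇ψ)ⱼ` (cyclic indices in `Fin 3`). -/
def Lop (j : Fin 3) (ψ : E3 → Fin 4 → ℂ) : E3 → Fin 4 → ℂ :=
  fun x => (-Complex.I) • (x (j + 1) • pd (j + 2) ψ x - x (j + 2) • pd (j + 1) ψ x)

/-- The operator `L²ψ = Σⱼ Lⱼ(Lⱼψ)`. -/
def L2op (ψ : E3 → Fin 4 → ℂ) : E3 → Fin 4 → ℂ :=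
  fun x => ∑ j, Lop j (Lop j ψ) x

/-- The operator `(Σ·L)ψ = Σⱼ Σⱼ(Lⱼψ)`. -/
def SigL (ψ : E3 → Fin 4 → ℂ) : E3 → Fin 4 → ℂ :=
  fun x => ∑ j, (SigM j).mulVec (Lop j ψ x)

/-- Dirac's operator `Kψ = β(ψ + (Σ·L)ψ)`. -/
def Kop (ψ : E3 → Fin 4 → ℂ) : E3 → Fin 4 → ℂ :=
  fun x => betaM.mulVec (ψ x + SigL ψ x)

/-!
The components `Lⱼ` are, up to the factor `-i`, derivations along the linear vector fields
`x ↦ eⱼ × x`, so their commutation relations `[Lⱼ, Lⱼ₊₁] = i Lⱼ₊₂` come from the Lie brackets of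
these fields. Hence `[Lₖ, Lₖ₊₁²]` and `[Lₖ, Lₖ₊₂²]` cancel, and `L²` commutes with every `Lₖ`. It
also commutes with constant matrices, which act on the values only, and `K` is built from these two
kinds of operators.
-/

open VectorField
open scoped ContDiff

section MulVec

variable {E p q : Type*} [NormedAddCommGroup E] [NormedSpace ℝ E] [Fintype q]

theorem contDiff_mulVec [Fintype p] {n : ℕ∞ω} (A : Matrix p q ℂ) {f : E → q → ℂ}
    (hf : ContDiff ℝ n f) : ContDiff ℝ n fun x => A *ᵥ f x :=
  (A.mulVecLin.restrictScalars ℝ).toContinuousLinearMap.contDiff.comp hf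

theorem fderiv_mulVec_apply [Finite p] (A : Matrix p q ℂ) {f : E → q → ℂ} {x : E}
    (hf : DifferentiableAt ℝ f x) (v : E) :
    fderiv ℝ (fun y => A *ᵥ f y) x v = A *ᵥ fderiv ℝ f x v := by
  have := Fintype.ofFinite p
  exact DFunLike.congr_fun ((A.mulVecLin.restrictScalars ℝ).toContinuousLinearMap.hasFDerivAt.comp x
    hf.hasFDerivAt).fderiv v

end MulVec

section AngularMomentum

variable {φ χ : E3 → Fin 4 → ℂ} {ι : Type*} {s : Finset ι} {f : ι → E3 → Fin 4 → ℂ} {m n : ℕ∞ω}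

/-- The infinitesimal rotation `x ↦ eⱼ × x` about the `j`-th axis (cyclic indices in `Fin 3`). The
operator `Lop j` is `-i` times differentiation along this vector field. -/
def rotationField (j : Fin 3) : E3 →L[ℝ] E3 :=
  (EuclideanSpace.proj (j + 1)).smulRight (EuclideanSpace.single (j + 2) 1) -
    (EuclideanSpace.proj (j + 2)).smulRight (EuclideanSpace.single (j + 1) 1)

theorem lieBracket_rotationField (j : Fin 3) (x : E3) :
    lieBracket ℝ (rotationField j) (rotationField (j + 1)) x = -rotationField (j + 2) x := by
  rw [lieBracket, ContinuousLinearMap.fderiv, ContinuousLinearMap.fderiv]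
  ext i
  fin_cases j <;> fin_cases i <;> simp [rotationField]

theorem Lop_apply (j : Fin 3) (φ : E3 → Fin 4 → ℂ) (x : E3) :
    Lop j φ x = -Complex.I • fderiv ℝ φ x (rotationField j x) := by
  simp [Lop, pd, rotationField]

theorem contDiff_Lop (j : Fin 3) (hφ : ContDiff ℝ n φ) (hmn : m + 1 ≤ n) :
    ContDiff ℝ m (Lop j φ) := by
  have hderiv : ContDiff ℝ m fun x => fderiv ℝ φ x (rotationField j x) :=
    (hφ.fderiv_right hmn).clm_apply (rotationField j).contDiff
  simpa only [← Lop_apply] using hderiv.const_smul (-Complex.I)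

theorem differentiable_Lop (j : Fin 3) (hφ : ContDiff ℝ 2 φ) : Differentiable ℝ (Lop j φ) :=
  (contDiff_Lop (m := 1) j hφ (by norm_num)).differentiable (by simp)

theorem Lop_add (j : Fin 3) (hφ : Differentiable ℝ φ) (hχ : Differentiable ℝ χ) :
    Lop j (φ + χ) = Lop j φ + Lop j χ := by
  funext x
  simp only [Lop_apply, Pi.add_apply, fderiv_add (hφ x) (hχ x), _root_.add_apply, smul_add]

theorem Lop_sum (j : Fin 3) (hf : ∀ i ∈ s, Differentiable ℝ (f i)) :
    Lop j (∑ i ∈ s, f i) = ∑ i ∈ s, Lop j (f i) := by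
  funext x
  simp only [Lop_apply, Finset.sum_apply, fderiv_sum fun i hi => hf i hi x, _root_.sum_apply,
    Finset.smul_sum]

theorem Lop_const_smul (j : Fin 3) (c : ℂ) (hφ : Differentiable ℝ φ) :
    Lop j (c • φ) = c • Lop j φ := by
  funext x
  simp only [Lop_apply, Pi.smul_apply, fderiv_const_smul (hφ x), _root_.smul_apply, smul_comm c]

theorem Lop_mulVec (j : Fin 3) (A : Matrix (Fin 4) (Fin 4) ℂ) (hφ : Differentiable ℝ φ) :
    Lop j (fun x => A *ᵥ φ x) = fun x => A *ᵥ Lop j φ x := by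
  funext x
  simp only [Lop_apply, fderiv_mulVec_apply A (hφ x), mulVec_smul]

theorem Lop_Lop_apply (k l : Fin 3) (hφ : ContDiff ℝ 2 φ) (x : E3) :
    Lop k (Lop l φ) x =
      -fderiv ℝ (fun y => fderiv ℝ φ y (rotationField l y)) x (rotationField k x) := by
  have hdiff : DifferentiableAt ℝ (fun y => fderiv ℝ φ y (rotationField l y)) x :=
    ((hφ.fderiv_right (m := 1) (by norm_num)).differentiable (by simp) x).clm_apply
      (rotationField l).differentiableAt
  rw [Lop_apply, funext (Lop_apply l φ), fderiv_fun_const_smul hdiff, _root_.smul_apply, smul_smul,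
    neg_mul_neg, Complex.I_mul_I, neg_one_smul]

theorem Lop_commutator (j : Fin 3) (hφ : ContDiff ℝ 2 φ) :
    Lop j (Lop (j + 1) φ) - Lop (j + 1) (Lop j φ) = Complex.I • Lop (j + 2) φ := by
  funext x
  have hbracket := fderiv_apply_lieBracket hφ.contDiffAt (by simp)
    (rotationField (j + 1)).differentiableAt (rotationField j).differentiableAt (x := x)
  rw [lieBracket_rotationField, map_neg] at hbracket
  rw [Pi.sub_apply, Lop_Lop_apply _ _ hφ, Lop_Lop_apply _ _ hφ, neg_sub_neg, ← neg_sub, ← hbracket,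
    neg_neg, Pi.smul_apply, Lop_apply, smul_smul, mul_neg, Complex.I_mul_I, neg_neg, one_smul]

theorem Lop_commutator_add_two (k : Fin 3) (hφ : ContDiff ℝ 2 φ) :
    Lop k (Lop (k + 2) φ) - Lop (k + 2) (Lop k φ) = -Complex.I • Lop (k + 1) φ := by
  have hcomm := Lop_commutator (k + 2) hφ
  rw [show k + 2 + 1 = k by fin_cases k <;> rfl,
    show k + 2 + 2 = k + 1 by fin_cases k <;> rfl] at hcomm
  rw [neg_smul, ← hcomm, neg_sub]

theorem Lop_commutator_sq {a b c : Fin 3} {z : ℂ}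
    (hcomm : ∀ χ, ContDiff ℝ 2 χ → Lop a (Lop b χ) - Lop b (Lop a χ) = z • Lop c χ)
    (hφ : ContDiff ℝ 3 φ) :
    Lop a (Lop b (Lop b φ)) - Lop b (Lop b (Lop a φ)) =
      z • (Lop b (Lop c φ) + Lop c (Lop b φ)) := by
  have hL (k : Fin 3) : ContDiff ℝ 2 (Lop k φ) := contDiff_Lop k hφ (by norm_num)
  have hdiff (k l : Fin 3) : Differentiable ℝ (Lop k (Lop l φ)) := differentiable_Lop k (hL l)
  have hLc : Differentiable ℝ (Lop c φ) := (hL c).differentiable (by simp)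
  have hswap (χ) (hχ : ContDiff ℝ 2 χ) : Lop a (Lop b χ) = Lop b (Lop a χ) + z • Lop c χ :=
    sub_eq_iff_eq_add'.1 (hcomm χ hχ)
  rw [hswap _ (hL b), hswap φ (hφ.of_le (by norm_num)), Lop_add b (hdiff b a) (hLc.const_smul z),
    Lop_const_smul b z hLc]
  module

theorem L2op_eq_sum (φ : E3 → Fin 4 → ℂ) : L2op φ = ∑ j, Lop j (Lop j φ) := by
  funext x
  rw [L2op, Finset.sum_apply]

theorem L2op_add (hφ : ContDiff ℝ 2 φ) (hχ : ContDiff ℝ 2 χ) :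
    L2op (φ + χ) = L2op φ + L2op χ := by
  simp only [L2op_eq_sum, ← Finset.sum_add_distrib,
    Lop_add _ (hφ.differentiable (by simp)) (hχ.differentiable (by simp)),
    Lop_add _ (differentiable_Lop _ hφ) (differentiable_Lop _ hχ)]

theorem L2op_sum (hf : ∀ i ∈ s, ContDiff ℝ 2 (f i)) :
    L2op (∑ i ∈ s, f i) = ∑ i ∈ s, L2op (f i) := by
  simp only [L2op_eq_sum, Lop_sum _ fun i hi => (hf i hi).differentiable (by simp),
    Lop_sum _ fun i hi => differentiable_Lop _ (hf i hi)]
  exact Finset.sum_comm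

theorem L2op_mulVec (A : Matrix (Fin 4) (Fin 4) ℂ) (hφ : ContDiff ℝ 2 φ) :
    L2op (fun x => A *ᵥ φ x) = fun x => A *ᵥ L2op φ x := by
  funext x
  simp only [L2op, Lop_mulVec _ A (hφ.differentiable (by simp)),
    Lop_mulVec _ A (differentiable_Lop _ hφ), mulVec_sum]

theorem L2op_Lop (k : Fin 3) (hφ : ContDiff ℝ 3 φ) : L2op (Lop k φ) = Lop k (L2op φ) := by
  have hdiff (j : Fin 3) : Differentiable ℝ (Lop j (Lop j φ)) :=
    differentiable_Lop j (contDiff_Lop j hφ (by norm_num))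
  have hcomm₁ := Lop_commutator_sq (fun _ => Lop_commutator k) hφ
  have hcomm₂ := Lop_commutator_sq (fun _ => Lop_commutator_add_two k) hφ
  have hsum (F : Fin 3 → E3 → Fin 4 → ℂ) : ∑ j, F j = F k + F (k + 1) + F (k + 2) := by
    rw [← Equiv.sum_comp (Equiv.addLeft k), Fin.sum_univ_three]
    simp
  refine (sub_eq_zero.1 ?_).symm
  calc
    Lop k (L2op φ) - L2op (Lop k φ)
      = ∑ j, (Lop k (Lop j (Lop j φ)) - Lop j (Lop j (Lop k φ))) := by
        rw [L2op_eq_sum, L2op_eq_sum, Lop_sum k fun j _ => hdiff j, Finset.sum_sub_distrib]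
    _ = Complex.I • (Lop (k + 1) (Lop (k + 2) φ) + Lop (k + 2) (Lop (k + 1) φ)) +
          -Complex.I • (Lop (k + 2) (Lop (k + 1) φ) + Lop (k + 1) (Lop (k + 2) φ)) := by
        rw [hsum, hcomm₁, hcomm₂, sub_self, zero_add]
    _ = 0 := by module

theorem SigL_eq_sum (φ : E3 → Fin 4 → ℂ) : SigL φ = ∑ j, fun x => SigM j *ᵥ Lop j φ x := by
  funext x
  rw [SigL, Finset.sum_apply]

theorem contDiff_SigL (hφ : ContDiff ℝ n φ) (hmn : m + 1 ≤ n) : ContDiff ℝ m (SigL φ) :=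
  ContDiff.sum fun j _ => contDiff_mulVec (SigM j) (contDiff_Lop j hφ hmn)

theorem L2op_SigL (hφ : ContDiff ℝ 3 φ) : L2op (SigL φ) = SigL (L2op φ) := by
  have hL (j : Fin 3) : ContDiff ℝ 2 (Lop j φ) := contDiff_Lop j hφ (by norm_num)
  simp only [SigL_eq_sum, L2op_sum fun j _ => contDiff_mulVec (SigM j) (hL j),
    L2op_mulVec _ (hL _), L2op_Lop _ hφ]

theorem L2op_comm_Kop_general (ψ : E3 → Fin 4 → ℂ) (hψ : ContDiff ℝ 3 ψ) :
    L2op (Kop ψ) = Kop (L2op ψ) := by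
  have hψ₂ : ContDiff ℝ 2 ψ := hψ.of_le (by norm_num)
  have hSigL : ContDiff ℝ 2 (SigL ψ) := contDiff_SigL hψ (by norm_num)
  calc
    L2op (Kop ψ) = fun x => betaM *ᵥ L2op (ψ + SigL ψ) x := L2op_mulVec betaM (hψ₂.add hSigL)
    _ = Kop (L2op ψ) := by
      rw [L2op_add hψ₂ hSigL, L2op_SigL hψ]
      rfl

end AngularMomentum

/-- For smooth `ψ : ℝ³ → ℂ⁴`, the operator `L²` commutes with Dirac's operator `K`:
`L²(Kψ) = K(L²ψ)`. -/
theorem L2op_comm_Kop (ψ : E3 → Fin 4 → ℂ) (hψ : ContDiff ℝ (⊤ : ℕ∞) ψ) (x : E3) :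
    L2op (Kop ψ) x = Kop (L2op ψ) x := by
  exact congrFun (L2op_comm_Kop_general ψ (contDiff_infty.1 hψ 3)) x

end
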